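/- Let r ≥ 2 be an integer and let G be a simple graph on a finite vertex set containing no clique of size r+1. For a vertex v of G, let f(v) be the number of unordered pairs {x, y} of distinct non-adjacent vertices with x, y ∈ N(v) such that the subgraph of G induced on N(x) ∩ N(y) ∩ N(v) contains a clique of size r-2. Then for every vertex v, f(v) ≤ C(d(v)-r+2, 2), where d(v) is the degree of v, C(·,2) is the binomial coefficient, and d(v)-r+2 is interpreted with truncated subtraction (so the bound is 0 when d(v) ≤ r-1). -/

import Mathlib

/-!
An unordered pair `e` counted by `f G r v` and a clique of size `r - 2` in the common neighbourhood
of `v` and the ends of `e` form an `r`-set `C ⊆ N(v)` in which `e` is the only non-edge of `G`.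
Hence a counted pair `e'` lies in the set `C` of `e` only if `e' = e`, so the pairs `e` and the
complements `N(v) \ C`, of sizes `2` and `d(v) - r`, form a cross-intersecting system. Bollobás's
set-pairs inequality bounds the size of such a system by `(2 + (d(v) - r)).choose 2`.
-/

open SimpleGraph

/-- `f G r v` is the number of unordered pairs `{x, y}` of distinct non-adjacent vertices
with `x, y ∈ N(v)` such that the subgraph of `G` induced on `N(x) ∩ N(y) ∩ N(v)`
contains a clique of size `r - 2`. -/
noncomputable def f {V : Type*} (G : SimpleGraph V) (r : ℕ) (v : V) : ℕ :=
  Set.ncard {e : Sym2 V | ∃ x y : V, e = s(x, y) ∧ x ≠ y ∧ ¬ G.Adj x y ∧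
    G.Adj v x ∧ G.Adj v y ∧
    ¬ (G.induce (G.neighborSet x ∩ G.neighborSet y ∩ G.neighborSet v)).CliqueFree (r - 2)}

section SetPairs

open Finset

variable {α ι : Type*}

theorem succ_mul_inv_choose (a b : ℕ) :
    (b + 1 : ℚ) * ((a + b).choose a : ℚ)⁻¹ = (a + b + 1) * ((a + (b + 1)).choose a : ℚ)⁻¹ := by
  have absorption : (a + b).choose a * (a + b + 1) = (a + (b + 1)).choose a * (b + 1) := by
    simpa only [add_assoc, Nat.add_sub_cancel_left] using Nat.choose_mul_succ_eq (a + b) a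
  have choose_ne_zero (n : ℕ) : ((a + n).choose a : ℚ) ≠ 0 :=
    mod_cast (Nat.choose_pos (Nat.le_add_right a n)).ne'
  rw [← div_eq_mul_inv, ← div_eq_mul_inv,
    div_eq_div_iff (choose_ne_zero b) (choose_ne_zero (b + 1)), mul_comm, mul_comm (_ + _ + 1 : ℚ)]
  exact_mod_cast absorption.symm

theorem sum_inv_choose_card_erase [DecidableEq α] {A B X : Finset α} (hA : A ⊆ X) (hB : B ⊆ X)
    (hAB : Disjoint A B) (hB₀ : B.Nonempty) :
    ∑ x ∈ X \ A, ((#A + #(B.erase x)).choose #A : ℚ)⁻¹ =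
      #X * ((#A + #B).choose #A : ℚ)⁻¹ := by
  have hBX : B ⊆ X \ A := subset_sdiff.2 ⟨hB, hAB.symm⟩
  have sum_outside : ∑ x ∈ (X \ A) \ B, ((#A + #(B.erase x)).choose #A : ℚ)⁻¹ =
      #((X \ A) \ B) * ((#A + #B).choose #A : ℚ)⁻¹ := by
    rw [← nsmul_eq_mul]
    exact sum_eq_card_nsmul fun x hx ↦ by rw [erase_eq_of_notMem (mem_sdiff.1 hx).2]
  have sum_inside : ∑ x ∈ B, ((#A + #(B.erase x)).choose #A : ℚ)⁻¹ =
      (#A + #B) * ((#A + #B).choose #A : ℚ)⁻¹ := by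
    obtain ⟨b, hb⟩ := Nat.exists_eq_add_one.2 hB₀.card_pos
    have hconst : ∀ x ∈ B, ((#A + #(B.erase x)).choose #A : ℚ)⁻¹ =
        ((#A + b).choose #A : ℚ)⁻¹ := fun x hx ↦ by
      rw [card_erase_of_mem hx, hb, Nat.add_sub_cancel]
    rw [sum_eq_card_nsmul hconst, hb, nsmul_eq_mul]
    push_cast
    rw [succ_mul_inv_choose, add_assoc]
  have hcard : (#((X \ A) \ B) + #B + #A : ℚ) = #X := by
    exact_mod_cast (congrArg (· + #A) (card_sdiff_add_card_eq_card hBX)).trans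
      (card_sdiff_add_card_eq_card hA)
  rw [← sum_sdiff hBX, sum_outside, sum_inside, ← hcard]
  ring

theorem sum_inv_choose_card_le_one_of_subset_of_disjoint_iff {s : Finset ι}
    {A B : ι → Finset α} {X : Finset α} (hA : ∀ i ∈ s, A i ⊆ X) (hB : ∀ i ∈ s, B i ⊆ X)
    (hAB : ∀ i ∈ s, ∀ j ∈ s, Disjoint (A i) (B j) ↔ i = j) :
    ∑ i ∈ s, ((#(A i) + #(B i)).choose #(A i) : ℚ)⁻¹ ≤ 1 := by
  classical
  -- Delete a point `x`, keep the pairs with `x ∉ A i`, and average over all `x ∈ X`.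
  induction X using Finset.strongInduction generalizing s B with
  | H X ih =>
    by_cases hempty : ∃ i ∈ s, B i = ∅
    · obtain ⟨i, hi, hBi⟩ := hempty
      have hs : s = {i} := eq_singleton_iff_unique_mem.2
        ⟨hi, fun j hj ↦ (hAB j hj i hi).1 (by simp [hBi])⟩
      simp [hs, hBi]
    have hne : ∀ i ∈ s, (B i).Nonempty := fun i hi ↦
      nonempty_iff_ne_empty.2 fun h ↦ hempty ⟨i, hi, h⟩
    obtain rfl | ⟨i₀, hi₀⟩ := s.eq_empty_or_nonempty
    · simp
    have hX : (0 : ℚ) < #X := mod_cast ((hne i₀ hi₀).mono (hB i₀ hi₀)).card_pos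
    have erase_bound : ∀ x ∈ X,
        ∑ i ∈ s with x ∉ A i, ((#(A i) + #((B i).erase x)).choose #(A i) : ℚ)⁻¹ ≤ 1 := by
      intro x hx
      refine ih (X.erase x) (erase_ssubset hx) (fun i hi ↦ ?_) (fun i hi ↦ ?_)
        fun i hi j hj ↦ ?_
      · exact subset_erase.2 ⟨hA i (mem_filter.1 hi).1, (mem_filter.1 hi).2⟩
      · exact erase_subset_erase _ (hB i (mem_filter.1 hi).1)
      · rw [mem_filter] at hi hj
        rw [← disjoint_erase_comm, erase_eq_of_notMem hi.2, hAB i hi.1 j hj.1]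
    refine le_of_mul_le_mul_left ?_ hX
    calc #X * ∑ i ∈ s, ((#(A i) + #(B i)).choose #(A i) : ℚ)⁻¹
        = ∑ i ∈ s, ∑ x ∈ X \ A i, ((#(A i) + #((B i).erase x)).choose #(A i) : ℚ)⁻¹ := by
          rw [mul_sum]
          exact sum_congr rfl fun i hi ↦ (sum_inv_choose_card_erase (hA i hi) (hB i hi)
            ((hAB i hi i hi).2 rfl) (hne i hi)).symm
      _ = ∑ x ∈ X, ∑ i ∈ s with x ∉ A i,
            ((#(A i) + #((B i).erase x)).choose #(A i) : ℚ)⁻¹ :=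
          sum_comm' fun i x ↦ by simp only [mem_sdiff, mem_filter]; tauto
      _ ≤ ∑ x ∈ X, 1 := sum_le_sum erase_bound
      _ = #X * 1 := by simp

/-- Bollobás's set-pairs inequality. -/
theorem sum_inv_choose_card_le_one_of_disjoint_iff {s : Finset ι} {A B : ι → Finset α}
    (hAB : ∀ i ∈ s, ∀ j ∈ s, Disjoint (A i) (B j) ↔ i = j) :
    ∑ i ∈ s, ((#(A i) + #(B i)).choose #(A i) : ℚ)⁻¹ ≤ 1 := by
  classical
  exact sum_inv_choose_card_le_one_of_subset_of_disjoint_iff (X := s.biUnion fun i ↦ A i ∪ B i)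
    (fun _ hi ↦ subset_union_left.trans (subset_biUnion_of_mem (fun i ↦ A i ∪ B i) hi))
    (fun _ hi ↦ subset_union_right.trans (subset_biUnion_of_mem (fun i ↦ A i ∪ B i) hi)) hAB

theorem card_le_choose_of_disjoint_iff {s : Finset ι} {A B : ι → Finset α} {a b : ℕ}
    (ha : ∀ i ∈ s, #(A i) = a) (hb : ∀ i ∈ s, #(B i) = b)
    (hAB : ∀ i ∈ s, ∀ j ∈ s, Disjoint (A i) (B j) ↔ i = j) :
    #s ≤ (a + b).choose a := by
  have hconst : ∀ i ∈ s, ((#(A i) + #(B i)).choose #(A i) : ℚ)⁻¹ =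
      ((a + b).choose a : ℚ)⁻¹ := fun i hi ↦ by rw [ha i hi, hb i hi]
  have hpos : (0 : ℚ) < (a + b).choose a := mod_cast Nat.choose_pos (Nat.le_add_right a b)
  have hsum := sum_inv_choose_card_le_one_of_disjoint_iff hAB
  rw [sum_eq_card_nsmul hconst, nsmul_eq_mul, ← div_eq_mul_inv, div_le_one hpos] at hsum
  exact_mod_cast hsum

theorem card_le_choose_of_subset_iff {s : Finset ι} {A C : ι → Finset α} {X : Finset α}
    {a c : ℕ} (hC : ∀ i ∈ s, C i ⊆ X) (ha : ∀ i ∈ s, #(A i) = a) (hc : ∀ i ∈ s, #(C i) = c)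
    (hAC : ∀ i ∈ s, ∀ j ∈ s, A i ⊆ C j ↔ i = j) :
    #s ≤ (#X + a - c).choose a := by
  classical
  obtain rfl | ⟨i₀, hi₀⟩ := s.eq_empty_or_nonempty
  · simp
  have hcX : c ≤ #X := hc i₀ hi₀ ▸ card_le_card (hC i₀ hi₀)
  have hAX : ∀ i ∈ s, A i ⊆ X := fun i hi ↦ ((hAC i hi i hi).2 rfl).trans (hC i hi)
  rw [show #X + a - c = a + (#X - c) by omega]
  refine card_le_choose_of_disjoint_iff (B := fun i ↦ X \ C i) ha
    (fun i hi ↦ by rw [card_sdiff_of_subset (hC i hi), hc i hi]) fun i hi j hj ↦ ?_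
  rw [← hAC i hi j hj]
  refine ⟨fun h x hx ↦ ?_, fun h ↦ disjoint_sdiff.mono_left h⟩
  by_contra hxC
  exact disjoint_left.1 h hx (mem_sdiff.2 ⟨hAX i hi hx, hxC⟩)

end SetPairs

section OnlyEdge

variable {V : Type*}

/-- `e` is the only edge of `H` with both ends in `C`. When `H = Gᶜ` and `C` has `r` vertices, this
says that `C` spans in `G` a complete graph on `r` vertices minus the edge `e`. -/
def IsOnlyEdgeIn (H : SimpleGraph V) (e : Sym2 V) (C : Finset V) : Prop :=
  H.edgeSet ∩ C.sym2 = {e}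

theorem IsOnlyEdgeIn.mem_edgeSet {H : SimpleGraph V} {e : Sym2 V} {C : Finset V}
    (h : IsOnlyEdgeIn H e C) : e ∈ H.edgeSet :=
  (h.ge rfl).1

theorem IsOnlyEdgeIn.mem_sym2_iff {H : SimpleGraph V} {e e' : Sym2 V} {C : Finset V}
    (h : IsOnlyEdgeIn H e C) (he' : e' ∈ H.edgeSet) : e' ∈ C.sym2 ↔ e' = e :=
  ⟨fun hC ↦ h.le ⟨he', hC⟩, fun heq ↦ heq ▸ (h.ge rfl).2⟩

theorem ncard_le_choose_of_forall_exists_isOnlyEdgeIn {H : SimpleGraph V} {S : Set (Sym2 V)}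
    {X : Finset V} {r : ℕ} (h : ∀ e ∈ S, ∃ C ⊆ X, C.card = r ∧ IsOnlyEdgeIn H e C) :
    S.ncard ≤ (X.card + 2 - r).choose 2 := by
  classical
  choose! C hCX hCr hC using h
  have hS : S.Finite := X.sym2.finite_toSet.subset fun e he ↦
    Finset.sym2_mono (hCX e he) (((hC e he).mem_sym2_iff (hC e he).mem_edgeSet).2 rfl)
  simp only [← hS.mem_toFinset] at hCX hCr hC
  rw [Set.ncard_eq_toFinset_card S hS]
  refine card_le_choose_of_subset_iff (A := Sym2.toFinset) hCX
    (fun e he ↦ e.card_toFinset_of_not_isDiag (H.not_isDiag_of_mem_edgeSet (hC e he).mem_edgeSet))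
    hCr fun e he e' he' ↦ ?_
  rw [← (hC e' he').mem_sym2_iff (hC e he).mem_edgeSet, Finset.mem_sym2_iff]
  simp only [Finset.subset_iff, Sym2.mem_toFinset]

variable [DecidableEq V] {G : SimpleGraph V} {K : Finset V} {x y : V}

theorem card_insert_insert_of_adj (hxy : x ≠ y) (hx : ∀ z ∈ K, G.Adj x z)
    (hy : ∀ z ∈ K, G.Adj y z) : (insert x (insert y K)).card = K.card + 2 := by
  have hyK : y ∉ K := fun h ↦ G.irrefl (hy y h)
  have hxK : x ∉ insert y K := by
    simpa [hxy] using fun h ↦ G.irrefl (hx x h)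
  rw [Finset.card_insert_of_notMem hxK, Finset.card_insert_of_notMem hyK]

theorem isOnlyEdgeIn_compl_insert_insert (hxy : x ≠ y) (hnadj : ¬ G.Adj x y)
    (hK : G.IsClique K) (hx : ∀ z ∈ K, G.Adj x z) (hy : ∀ z ∈ K, G.Adj y z) :
    IsOnlyEdgeIn Gᶜ s(x, y) (insert x (insert y K)) := by
  refine Set.eq_singleton_iff_unique_mem.2 ⟨by simp [hxy, hnadj], fun e he ↦ ?_⟩
  induction e with | h a b
  simp only [Set.mem_inter_iff, mem_edgeSet, compl_adj, Finset.mem_coe, Finset.mk_mem_sym2_iff,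
    Finset.mem_insert] at he
  obtain ⟨⟨hab, hnab⟩, rfl | rfl | ha, rfl | rfl | hb⟩ := he
  · exact absurd rfl hab
  · rfl
  · exact absurd (hx b hb) hnab
  · exact Sym2.eq_swap
  · exact absurd rfl hab
  · exact absurd (hy b hb) hnab
  · exact absurd (hx a ha).symm hnab
  · exact absurd (hy a ha).symm hnab
  · exact absurd (hK ha hb hab) hnab

end OnlyEdge

theorem stmt_9_general {V : Type*} (r : ℕ) (hr : 2 ≤ r) (G : SimpleGraph V) (v : V)
    [Fintype (G.neighborSet v)] : f G r v ≤ (G.degree v + 2 - r).choose 2 := by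
  classical
  rw [← G.card_neighborFinset_eq_degree v]
  refine ncard_le_choose_of_forall_exists_isOnlyEdgeIn (H := Gᶜ) ?_
  rintro _ ⟨x, y, rfl, hxy, hnadj, hvx, hvy, hclique⟩
  rw [cliqueFree_induce_iff, CliqueFreeOn] at hclique
  push Not at hclique
  obtain ⟨K, hKN, hK⟩ := hclique
  have hxK : ∀ z ∈ K, G.Adj x z := fun z hz ↦ (hKN hz).1.1
  have hyK : ∀ z ∈ K, G.Adj y z := fun z hz ↦ (hKN hz).1.2
  have hvK : K ⊆ G.neighborFinset v := fun z hz ↦ (G.mem_neighborFinset v z).2 (hKN hz).2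
  refine ⟨insert x (insert y K), ?_, ?_,
    isOnlyEdgeIn_compl_insert_insert hxy hnadj hK.isClique hxK hyK⟩
  · simp only [Finset.insert_subset_iff, mem_neighborFinset]
    exact ⟨hvx, hvy, hvK⟩
  · rw [card_insert_insert_of_adj hxy hxK hyK, hK.card_eq, Nat.sub_add_cancel hr]

theorem stmt_9 {V : Type*} [Fintype V] [DecidableEq V] (r : ℕ) (hr : 2 ≤ r)
    (G : SimpleGraph V) [DecidableRel G.Adj] (hfree : G.CliqueFree (r + 1)) :
    ∀ v : V, f G r v ≤ (G.degree v + 2 - r).choose 2 :=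
  fun v ↦ stmt_9_general r hr G v
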